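/- Let X be an uncountable Polish space (a separable completely metrizable topological space). Then the quotient of the set of all closed subsets of X by the equivalence relation 'homeomorphic (with the subspace topologies)' has cardinality exactly 2^ℵ₀. -/

import Mathlib

open Metric Set
open scoped ENNReal NNReal

noncomputable section

/-- A metric space is doubling if there is `N` such that every closed ball of radius `r`
can be covered by at most `N` closed balls of radius `r / 2`. -/
def IsDoubling (X : Type*) [MetricSpace X] : Prop :=
  ∃ N : ℕ, ∀ (x : X) (r : ℝ), ∃ c : Finset X, c.card ≤ N ∧
    Metric.closedBall x r ⊆ ⋃ y ∈ c, Metric.closedBall y (r / 2)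

/-- Every `δ`-chain is trivial (constant). -/
def IsUniformlyDisconnectedWith (X : Type*) [MetricSpace X] (δ : ℝ) : Prop :=
  ∀ (N : ℕ) (x : ℕ → X),
    (∀ i : ℕ, 1 ≤ i → i ≤ N → dist (x (i - 1)) (x i) ≤ δ * dist (x 0) (x N)) →
    ∀ i ≤ N, x i = x 0

def IsUniformlyDisconnected (X : Type*) [MetricSpace X] : Prop :=
  ∃ δ : ℝ, 0 < δ ∧ δ < 1 ∧ IsUniformlyDisconnectedWith X δ

/-- `ρ`-uniform perfectness. -/
def IsUniformlyPerfectWith (X : Type*) [MetricSpace X] (ρ : ℝ) : Prop :=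
  ∀ (x : X) (r : ℝ), 0 < r → r < Metric.diam (Set.univ : Set X) →
    (Metric.closedBall x r \ Metric.ball x (ρ * r)).Nonempty

def IsUniformlyPerfect (X : Type*) [MetricSpace X] : Prop :=
  ∃ ρ : ℝ, 0 < ρ ∧ ρ ≤ 1 ∧ IsUniformlyPerfectWith X ρ

/-- A metric space has type `(u, v, w) ∈ {0,1}³` (here encoded by `Bool`s) if `u = 1` exactly
when it is doubling, `v = 1` exactly when it is uniformly disconnected, and `w = 1` exactly
when it is uniformly perfect. -/
def HasType (X : Type*) [MetricSpace X] (u v w : Bool) : Prop :=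
  (IsDoubling X ↔ u = true) ∧ (IsUniformlyDisconnected X ↔ v = true) ∧
    (IsUniformlyPerfect X ↔ w = true)

/-- `S_D`: points having no doubling neighborhood. -/
def SD (X : Type*) [MetricSpace X] : Set X :=
  {x : X | ∀ s ∈ nhds x, ¬ IsDoubling ↥s}

/-- `S_UD`: points having no uniformly disconnected neighborhood. -/
def SUD (X : Type*) [MetricSpace X] : Set X :=
  {x : X | ∀ s ∈ nhds x, ¬ IsUniformlyDisconnected ↥s}

/-- `S_UP`: points having no uniformly perfect neighborhood. -/
def SUP (X : Type*) [MetricSpace X] : Set X :=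
  {x : X | ∀ s ∈ nhds x, ¬ IsUniformlyPerfect ↥s}

/-- The ternary correspondence map `T(x) = Σ_{i≥1} 2 x_i / 3^i` (indices shifted to start
at `0`). -/
def cantorT (x : ℕ → Bool) : ℝ :=
  ∑' i : ℕ, 2 * (if x i then (1 : ℝ) else 0) / 3 ^ (i + 1)

/-- A Cantor space: a topological space homeomorphic to the middle-third Cantor set
(`cantorSet` is Mathlib's middle-third Cantor set in `ℝ`). -/
def IsCantorSpace (X : Type*) [TopologicalSpace X] : Prop :=
  Nonempty (X ≃ₜ ↥cantorSet)

/-- The first index at which `x` and `y` differ. -/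
def seqV (x y : ℕ → Bool) : ℕ := sInf {n | x n ≠ y n}

-- The standard ultrametric `e(x,y) = 3^{-(v(x,y)+1)}` on `2^ℕ` (indices starting at `0`,
-- corresponding to `3^{-min{n ≥ 1 : x_n ≠ y_n}}` with indices starting at `1`).
open Classical in
def cantorE (x y : ℕ → Bool) : ℝ :=
  if x = y then 0 else (3 : ℝ)⁻¹ ^ (seqV x y + 1)

/-- A shrinking sequence: positive, non-increasing, converging to `0`. -/
def IsShrinking (α : ℕ → ℝ) : Prop :=
  (∀ n, 0 < α n) ∧ (∀ m n : ℕ, m ≤ n → α n ≤ α m) ∧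
    Filter.Tendsto α Filter.atTop (nhds 0)

-- The distance `d_α(x,y) = α (v(x,y))` associated with a sequence `α`.
open Classical in
def seqDist (α : ℕ → ℝ) (x y : ℕ → Bool) : ℝ :=
  if x = y then 0 else α (seqV x y)

lemma seqV_comm (x y : ℕ → Bool) : seqV x y = seqV y x := by
  unfold seqV
  congr 1
  ext n
  exact ne_comm

lemma seqDist_self (α : ℕ → ℝ) (x : ℕ → Bool) : seqDist α x x = 0 := by
  rw [seqDist, if_pos rfl]

lemma seqDist_of_ne (α : ℕ → ℝ) {x y : ℕ → Bool} (h : x ≠ y) :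
    seqDist α x y = α (seqV x y) := by
  rw [seqDist, if_neg h]

lemma seqDist_nonneg {α : ℕ → ℝ} (hα : ∀ n, 0 < α n) (x y : ℕ → Bool) :
    0 ≤ seqDist α x y := by
  rcases eq_or_ne x y with h | h
  · rw [h, seqDist_self]
  · rw [seqDist_of_ne α h]
    exact (hα _).le

lemma min_seqV_le {x y z : ℕ → Bool} (hxz : x ≠ z) :
    min (seqV x y) (seqV y z) ≤ seqV x z := by
  have hne : {n | x n ≠ z n}.Nonempty := by
    rcases Function.ne_iff.mp hxz with ⟨n, hn⟩
    exact ⟨n, hn⟩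
  have hmem : x (seqV x z) ≠ z (seqV x z) := Nat.sInf_mem hne
  rcases ne_or_eq (x (seqV x z)) (y (seqV x z)) with h | h
  · exact le_trans (min_le_left _ _) (Nat.sInf_le h)
  · have h' : y (seqV x z) ≠ z (seqV x z) := by rw [← h]; exact hmem
    exact le_trans (min_le_right _ _) (Nat.sInf_le h')

/-- The sequentially metrized Cantor space `(2^ℕ, d_α)` for a shrinking sequence `α`. -/
def seqMetricSpace (α : ℕ → ℝ) (hα : IsShrinking α) : MetricSpace (ℕ → Bool) where
  dist := seqDist α
  dist_self x := seqDist_self α x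
  dist_comm x y := by
    show seqDist α x y = seqDist α y x
    rcases eq_or_ne x y with h | h
    · rw [h]
    · rw [seqDist_of_ne α h, seqDist_of_ne α h.symm, seqV_comm]
  dist_triangle x y z := by
    show seqDist α x z ≤ seqDist α x y + seqDist α y z
    rcases eq_or_ne x z with hxz | hxz
    · rw [hxz, seqDist_self]
      exact add_nonneg (seqDist_nonneg hα.1 _ _) (seqDist_nonneg hα.1 _ _)
    rcases eq_or_ne x y with hxy | hxy
    · subst hxy
      rw [seqDist_self, zero_add]
    rcases eq_or_ne y z with hyz | hyz
    · subst hyz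
      rw [seqDist_self, add_zero]
    rw [seqDist_of_ne α hxz, seqDist_of_ne α hxy, seqDist_of_ne α hyz]
    have h1 : α (seqV x z) ≤ α (min (seqV x y) (seqV y z)) :=
      hα.2.1 _ _ (min_seqV_le hxz)
    rcases min_cases (seqV x y) (seqV y z) with ⟨he, _⟩ | ⟨he, _⟩
    · rw [he] at h1
      exact h1.trans (le_add_of_nonneg_right (hα.1 _).le)
    · rw [he] at h1
      exact h1.trans (le_add_of_nonneg_left (hα.1 _).le)
  eq_of_dist_eq_zero := by
    intro x y h
    by_contra hne
    have h' : seqDist α x y = 0 := h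
    rw [seqDist_of_ne α hne] at h'
    exact absurd h' (ne_of_gt (hα.1 _))

/-- The Assouad dimension of a metric space. -/
def assouadDim (X : Type*) [MetricSpace X] : ℝ≥0∞ :=
  sInf {d : ℝ≥0∞ | ∃ s : ℝ, 0 < s ∧ d = ENNReal.ofReal s ∧ ∃ K : ℝ, 0 < K ∧
    ∀ ε : ℝ, 0 < ε → ε < 2 → ∀ r : ℝ, 0 < r → ∀ x : X,
      ∃ c : Finset X, (c.card : ℝ) ≤ K * ε ^ (-s) ∧
        Metric.closedBall x r ⊆ ⋃ y ∈ c, Metric.closedBall y (ε * r)}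

/-- The Hausdorff dimension of (the whole of) a metric space. -/
def hausdorffDim (X : Type*) [MetricSpace X] : ℝ≥0∞ := dimH (Set.univ : Set X)

/-- The topology induced by a metric. -/
def metricTopology {X : Type*} (m : MetricSpace X) : TopologicalSpace X :=
  m.toPseudoMetricSpace.toUniformSpace.toTopologicalSpace

/-- `f : X → Y` is quasi-symmetric: for some self-homeomorphism `η` of `[0,∞)`,
`d(f x, f y)/d(f x, f z) ≤ η (d(x,y)/d(x,z))` for all distinct `x, y, z`. -/
def IsQuasiSymmetric {X Y : Type*} [MetricSpace X] [MetricSpace Y] (f : X → Y) : Prop :=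
  ∃ η : Homeomorph (Set.Ici (0 : ℝ)) (Set.Ici (0 : ℝ)),
    ∀ x y z : X, x ≠ y → x ≠ z → y ≠ z →
      dist (f x) (f y) / dist (f x) (f z) ≤
        (η ⟨dist x y / dist x z, div_nonneg dist_nonneg dist_nonneg⟩ : ℝ)

/-- Two metric spaces (given by explicit metric structures) are quasi-symmetrically
equivalent if there is a quasi-symmetric homeomorphism between them. -/
def QSEquiv (X Y : Type*) (mX : MetricSpace X) (mY : MetricSpace Y) : Prop :=
  ∃ f : @Homeomorph X Y (metricTopology mX) (metricTopology mY),
    @IsQuasiSymmetric X Y mX mY f.toEquiv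


/-- The `ℓ^∞`-product metric (the sup metric) on `X × Y`. -/
def prodMetric {X Y : Type*} (mX : MetricSpace X) (mY : MetricSpace Y) :
    MetricSpace (X × Y) :=
  letI := mX; letI := mY; Prod.metricSpaceMax

/-!
Encode `S ⊆ ℕ` by the closed subset `{x ⊆ S : |x| ≤ 1} × Y ∪ {x : |x| ≤ i + 2 for all i ∈ x} × {b}`
of `2^ℕ × Y`, where `Y` is perfect and `b ∈ Y`. Outside its perfect kernel `{x ⊆ S : |x| ≤ 1} × Y`,
the point `(x, b)` has Cantor–Bendixson rank `min x + 2 - |x|`. Among the kernel points, those off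
`2^ℕ × {b}` are not limits of scattered points, `(∅, b)` is a limit of points of every finite rank,
and for `n ∈ S` the points near `({n}, b)` outside the kernel are `(x, b)` with `n ∈ x` and
`|x| ≥ 2`, whose ranks are at most `n`, with rank `n` attained arbitrarily close. So `S` is the set
of finite maximal ranks seen from the perfect kernel, which is a homeomorphism invariant.
-/

open Filter Topology CantorBendixson

section RankSpectrum

variable {X Y : Type*} [TopologicalSpace X] [TopologicalSpace Y] {f : X → Y}

lemma subset_perfectKernel_of_preperfect {s t : Set X} (hs : Preperfect s) (hst : s ⊆ t) :
    s ⊆ perfectKernel t :=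
  subset_iInter fun a ↦ (iteratedDerivedSet_constant_iff_preperfect.1 hs a).ge.trans
    (iteratedDerivedSet_mono hst a)

lemma preperfect_perfectKernel (s : Set X) : Preperfect (perfectKernel s) := by
  obtain ⟨a, ha⟩ := iteratedDerivedSet_mem_fixedPoints s
  rw [perfectKernel_eq_iteratedDerivedSet_of_mem_fixedPoints ha]
  exact preperfect_iff_eq_relDerivedSet.2 ha.symm

lemma preperfect_prod_univ [PerfectSpace Y] (s : Set X) : Preperfect (s ×ˢ (univ : Set Y)) := by
  rintro ⟨x, y⟩ ⟨hx, -⟩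
  have hy : AccPt y (𝓟 univ) := PerfectSpace.univ_preperfect y (mem_univ y)
  have hmap : AccPt (x, y) (map (Prod.mk x) (𝓟 univ)) :=
    hy.map (by fun_prop) (Prod.mk_right_injective x)
  exact hmap.mono (by simpa [map_principal, range_subset_iff] using fun _ ↦ hx)

lemma accPt_image_iff (hf : IsEmbedding f) {s : Set X} {x : X} :
    AccPt (f x) (𝓟 (f '' s)) ↔ AccPt x (𝓟 s) := by
  rw [accPt_principal_iff_clusterPt, accPt_principal_iff_clusterPt, ← mem_closure_iff_clusterPt,
    ← mem_closure_iff_clusterPt, hf.closure_eq_preimage_closure_image, mem_preimage,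
    image_sdiff hf.injective, image_singleton]

lemma image_relDerivedSet (hf : IsEmbedding f) (s : Set X) :
    f '' relDerivedSet s = relDerivedSet (f '' s) := by
  ext y
  constructor
  · rintro ⟨x, ⟨hacc, hx⟩, rfl⟩
    exact ⟨(accPt_image_iff hf).2 hacc, mem_image_of_mem f hx⟩
  · rintro ⟨hacc, x, hx, rfl⟩
    exact mem_image_of_mem f ⟨(accPt_image_iff hf).1 hacc, hx⟩

lemma image_iteratedDerivedSet (hf : IsEmbedding f) (s : Set X) (k : ℕ) :
    f '' sᵈ[k] = (f '' s)ᵈ[k] := by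
  induction k with
  | zero => simp
  | succ k ih =>
    rw [Nat.cast_succ, Nat.cast_succ, iteratedDerivedSet_succ, iteratedDerivedSet_succ,
      image_relDerivedSet hf, ih]

lemma preperfect_image_iff (hf : IsEmbedding f) {s : Set X} :
    Preperfect (f '' s) ↔ Preperfect s := by
  rw [preperfect_iff_eq_relDerivedSet, preperfect_iff_eq_relDerivedSet, ← image_relDerivedSet hf,
    hf.injective.image_injective.eq_iff]

lemma image_perfectKernel (hf : IsEmbedding f) (s : Set X) :
    f '' perfectKernel s = perfectKernel (f '' s) := by
  apply subset_antisymm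
  · exact subset_perfectKernel_of_preperfect
      ((preperfect_image_iff hf).2 (preperfect_perfectKernel s))
      (image_mono (perfectKernel_subset s))
  · obtain ⟨t, hts, ht⟩ := subset_image_iff.1 (perfectKernel_subset (f '' s))
    have hpre : Preperfect t :=
      (preperfect_image_iff hf).1 (ht ▸ preperfect_perfectKernel (f '' s))
    rw [← ht]
    exact image_mono (subset_perfectKernel_of_preperfect hpre hts)

/-- The points of `s` whose Cantor–Bendixson rank in `s` is exactly the natural number `k`. -/
def rankLayer (s : Set X) (k : ℕ) : Set X := sᵈ[k] \ sᵈ[k + 1]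

/-- The set of natural numbers `n` such that some point of the perfect kernel of `s` is a limit of
points of `s` of rank `n`, but not of points of any larger finite rank. It is the invariant which
tells closed sets apart. -/
def rankSpectrum (s : Set X) : Set ℕ :=
  {n | ∃ p ∈ perfectKernel s, IsGreatest {k | p ∈ closure (rankLayer s k)} n}

lemma image_rankLayer (hf : IsEmbedding f) (s : Set X) (k : ℕ) :
    f '' rankLayer s k = rankLayer (f '' s) k := by
  have hsucc := image_iteratedDerivedSet hf s (k + 1)
  rw [Nat.cast_succ, Nat.cast_succ] at hsucc
  rw [rankLayer, rankLayer, image_sdiff hf.injective, image_iteratedDerivedSet hf, hsucc]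

lemma rankSpectrum_image (hf : IsEmbedding f) (s : Set X) :
    rankSpectrum (f '' s) = rankSpectrum s := by
  simp only [rankSpectrum, ← image_perfectKernel hf, ← image_rankLayer hf, exists_mem_image,
    hf.closure_eq_preimage_closure_image (rankLayer s _), mem_preimage]

lemma rankSpectrum_eq_of_homeomorph {s : Set X} {t : Set Y} (e : s ≃ₜ t) :
    rankSpectrum s = rankSpectrum t := by
  have hs : rankSpectrum s = rankSpectrum (univ : Set s) := by
    simpa using rankSpectrum_image (IsEmbedding.subtypeVal (p := (· ∈ s))) univ
  have ht : rankSpectrum t = rankSpectrum (univ : Set s) := by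
    have := rankSpectrum_image (IsEmbedding.subtypeVal.comp e.isEmbedding) univ
    rwa [image_univ, e.surjective.range_comp, Subtype.range_coe] at this
  rw [hs, ht]

end RankSpectrum

section BoolSupport

variable {ι : Type*}

lemma tendsto_update_cofinite {X : ι → Type*} [DecidableEq ι] [∀ i, TopologicalSpace (X i)]
    (x a : ∀ i, X i) : Tendsto (fun i ↦ Function.update x i (a i)) cofinite (𝓝 x) := by
  refine tendsto_pi_nhds.2 fun j ↦ tendsto_nhds_of_eventually_eq ?_
  filter_upwards [(finite_singleton j).compl_mem_cofinite] with i hi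
  exact Function.update_of_ne (Ne.symm hi) _ _

instance perfectSpace_pi [Infinite ι] {X : ι → Type*} [∀ i, TopologicalSpace (X i)]
    [∀ i, Nontrivial (X i)] : PerfectSpace (∀ i, X i) := by
  classical
  refine ⟨fun x _ ↦ accPt_iff_frequently.2 ?_⟩
  choose a ha using fun i ↦ exists_ne (x i)
  refine (tendsto_update_cofinite x a).frequently (Eventually.of_forall fun i ↦ ?_).frequently
  exact ⟨fun h ↦ ha i (by simpa using congrFun h i), mem_univ _⟩

/-- The subset of `ι` whose characteristic function is `x`; it identifies `2^ι` with the power set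
of `ι`. -/
def boolSupport (x : ι → Bool) : Set ι := {i | x i = true}

@[simp]
lemma mem_boolSupport {x : ι → Bool} {i : ι} : i ∈ boolSupport x ↔ x i = true := Iff.rfl

lemma boolSupport_injective : Function.Injective (boolSupport (ι := ι)) := fun _ _ h ↦
  funext fun i ↦ Bool.eq_iff_iff.2 (Set.ext_iff.1 h i)

lemma boolSupport_boolIndicator (s : Set ι) : boolSupport s.boolIndicator = s :=
  s.preimage_boolIndicator_true

lemma boolSupport_update_true [DecidableEq ι] (x : ι → Bool) (i : ι) :
    boolSupport (Function.update x i true) = insert i (boolSupport x) := by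
  ext j
  by_cases h : j = i <;> simp [h]

lemma isClopen_setOf_mem_boolSupport (i : ι) : IsClopen {x : ι → Bool | i ∈ boolSupport x} :=
  (isClopen_discrete {true}).preimage (continuous_apply i)

lemma eventually_subset_boolSupport {x : ι → Bool} {t : Set ι} (ht : t.Finite)
    (htx : t ⊆ boolSupport x) : ∀ᶠ x' in 𝓝 x, t ⊆ boolSupport x' :=
  (eventually_all_finite ht).2 fun i hi ↦
    (isClopen_setOf_mem_boolSupport i).isOpen.mem_nhds (htx hi)

lemma lowerSemicontinuous_encard_boolSupport :
    LowerSemicontinuous fun x : ι → Bool ↦ (boolSupport x).encard := by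
  intro x c hc
  obtain ⟨t, htx, ht⟩ := exists_subset_encard_eq (Order.add_one_le_of_lt hc)
  have hc' : c ≠ ⊤ := hc.ne_top
  have hct : c < t.encard := ht ▸ ENat.lt_add_one_iff hc' |>.2 le_rfl
  have hfin : t.Finite := encard_ne_top_iff.1 (by simpa [ht] using hc')
  filter_upwards [eventually_subset_boolSupport hfin htx] with x' hx'
  exact hct.trans_le (encard_le_encard hx')

end BoolSupport

section SetFamilies

/-- The subsets of `S` with at most one element, as a subset of `2^ι`; it is the
base of the perfect part of the closed set encoding `S`. -/
def subsingletonFamily {ι : Type*} (S : Set ι) : Set (ι → Bool) :=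
  {x | (boolSupport x).encard ≤ 1 ∧ boolSupport x ⊆ S}

/-- A Schreier-type family: the sets `x ⊆ ℕ` with `|x| + k ≤ i + 2` for all `i ∈ x`. The empty set
belongs to it, and a nonempty member `x` of the family for `0` has Cantor–Bendixson rank
`min x + 2 - |x|` in that family. -/
def schreierFamily (k : ℕ) : Set (ℕ → Bool) :=
  {x | ∀ i ∈ boolSupport x, (boolSupport x).encard + k ≤ i + 2}

lemma isClosed_subsingletonFamily {ι : Type*} (S : Set ι) : IsClosed (subsingletonFamily S) := by
  have hsub : IsClosed {x : ι → Bool | boolSupport x ⊆ S} := by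
    have : {x : ι → Bool | boolSupport x ⊆ S} = ⋂ i ∈ Sᶜ, {x | i ∈ boolSupport x}ᶜ := by
      ext x
      simp [subset_def, not_imp_comm]
    rw [this]
    exact isClosed_biInter fun i _ ↦ (isClopen_setOf_mem_boolSupport i).compl.isClosed
  exact (lowerSemicontinuous_encard_boolSupport.isClosed_preimage 1).inter hsub

lemma isClosed_schreierFamily (k : ℕ) : IsClosed (schreierFamily k) := by
  have hlsc : LowerSemicontinuous fun x : ℕ → Bool ↦ (boolSupport x).encard + k :=
    lowerSemicontinuous_encard_boolSupport.add lowerSemicontinuous_const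
  have : schreierFamily k =
      ⋂ i : ℕ, {x | i ∈ boolSupport x}ᶜ ∪ {x | (boolSupport x).encard + k ≤ i + 2} := by
    ext x
    simp [schreierFamily, imp_iff_not_or]
  rw [this]
  exact isClosed_iInter fun i ↦
    (isClopen_setOf_mem_boolSupport i).compl.isClosed.union (hlsc.isClosed_preimage _)

lemma mem_subsingletonFamily_iff {ι : Type*} {S : Set ι} {x : ι → Bool} :
    x ∈ subsingletonFamily S ↔ boolSupport x = ∅ ∨ ∃ n ∈ S, boolSupport x = {n} := by
  rw [subsingletonFamily, mem_ofPred_eq, encard_le_one_iff_eq]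
  constructor
  · rintro ⟨h | ⟨n, h⟩, hS⟩
    · exact Or.inl h
    · exact Or.inr ⟨n, by simpa [h] using hS, h⟩
  · rintro (h | ⟨n, hn, h⟩) <;> simp [*]

lemma subsingletonFamily_of_boolSupport_subset {ι : Type*} {S : Set ι} {x x' : ι → Bool}
    (h : boolSupport x ⊆ boolSupport x') (hx' : x' ∈ subsingletonFamily S) :
    x ∈ subsingletonFamily S :=
  ⟨(encard_le_encard h).trans hx'.1, h.trans hx'.2⟩

variable {S : Set ℕ} {x x' : ℕ → Bool} {k m i : ℕ}

lemma boolSupport_finite_of_mem_schreierFamily (hx : x ∈ schreierFamily k) :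
    (boolSupport x).Finite := by
  rcases (boolSupport x).eq_empty_or_nonempty with h | ⟨i, hi⟩
  · exact h ▸ finite_empty
  · have hle : (boolSupport x).encard ≤ ((i + 2 : ℕ) : ℕ∞) := le_self_add.trans (hx i hi)
    exact finite_of_encard_le_coe hle

lemma boolSupport_eq_empty_of_forall_mem_schreierFamily (hx : ∀ k, x ∈ schreierFamily k) :
    boolSupport x = ∅ := by
  refine eq_empty_of_forall_notMem fun i hi ↦ ?_
  have hle : ((i + 3 : ℕ) : ℕ∞) ≤ ((i + 2 : ℕ) : ℕ∞) := le_add_self.trans (hx (i + 3) i hi)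
  exact absurd (Nat.cast_le.1 hle) (by lia)

lemma mem_schreierFamily_succ_of_ssubset (hx : (boolSupport x).Finite)
    (h : boolSupport x ⊂ boolSupport x') (hx' : x' ∈ schreierFamily k) :
    x ∈ schreierFamily (k + 1) := fun i hi ↦
  calc (boolSupport x).encard + (k + 1 : ℕ)
      = (boolSupport x).encard + 1 + k := by push_cast; ring
    _ ≤ (boolSupport x').encard + k := by
        gcongr
        exact Order.add_one_le_of_lt (hx.encard_lt_encard h)
    _ ≤ i + 2 := hx' i (h.subset hi)

lemma update_mem_schreierFamily (hx : x ∈ schreierFamily (k + 1)) (hi : i ∈ boolSupport x)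
    (him : i ≤ m) : Function.update x m true ∈ schreierFamily k := by
  have hcard (j : ℕ) (hj : j ∈ boolSupport x) :
      (insert m (boolSupport x)).encard + k ≤ j + 2 :=
    calc (insert m (boolSupport x)).encard + k
        ≤ (boolSupport x).encard + 1 + k := by gcongr; exact encard_insert_le _ _
      _ = (boolSupport x).encard + (k + 1 : ℕ) := by push_cast; ring
      _ ≤ j + 2 := hx j hj
  intro j hj
  rw [boolSupport_update_true] at hj ⊢
  rcases hj with rfl | hj
  · exact (hcard i hi).trans (by gcongr)
  · exact hcard j hj

end SetFamilies

section SchreierCode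

variable {Y : Type*} {S : Set ℕ} {b : Y} {k n : ℕ}

/-- The closed subset of `2^ℕ × Y` encoding `S` is the one for `k = 0`; the others are its iterated
derived sets, given in closed form. -/
def schreierCode (S : Set ℕ) (b : Y) (k : ℕ) : Set ((ℕ → Bool) × Y) :=
  subsingletonFamily S ×ˢ univ ∪ schreierFamily k ×ˢ {b}

variable [TopologicalSpace Y]

lemma schreierCode_succ_subset_derivedSet [PerfectSpace Y] :
    schreierCode S b (k + 1) ⊆ derivedSet (schreierCode S b k) := by
  have hkernel : subsingletonFamily S ×ˢ univ ⊆ derivedSet (schreierCode S b k) :=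
    Subset.trans (preperfect_prod_univ _) (derivedSet_mono _ _ subset_union_left)
  rintro ⟨x, y⟩ (hS | ⟨hx, rfl : y = b⟩)
  · exact hkernel hS
  rcases (boolSupport x).eq_empty_or_nonempty with hempty | ⟨i, hi⟩
  · exact hkernel ⟨mem_subsingletonFamily_iff.2 (Or.inl hempty), mem_univ _⟩
  have hlim : Tendsto (fun m ↦ (Function.update x m true, y)) atTop (𝓝 (x, y)) := by
    rw [← Nat.cofinite_eq_atTop]
    exact (tendsto_update_cofinite x fun _ ↦ true).prodMk_nhds tendsto_const_nhds
  have hnotMem : ∀ᶠ m in atTop, m ∉ boolSupport x := by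
    rw [← Nat.cofinite_eq_atTop]
    exact (boolSupport_finite_of_mem_schreierFamily hx).eventually_cofinite_notMem
  refine accPt_iff_frequently.2 (hlim.frequently (Eventually.frequently ?_))
  filter_upwards [hnotMem, eventually_ge_atTop i] with m hm him
  refine ⟨fun h ↦ hm ?_, Or.inr ⟨update_mem_schreierFamily hx hi him, rfl⟩⟩
  have hx' : Function.update x m true = x := congrArg Prod.fst h
  rw [← hx', boolSupport_update_true]
  exact mem_insert m _

variable [T1Space Y]

lemma isClosed_schreierCode (S : Set ℕ) (b : Y) (k : ℕ) : IsClosed (schreierCode S b k) :=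
  ((isClosed_subsingletonFamily S).prod isClosed_univ).union
    ((isClosed_schreierFamily k).prod isClosed_singleton)

lemma derivedSet_schreierCode_subset :
    derivedSet (schreierCode S b k) ⊆ schreierCode S b (k + 1) := by
  intro p hp
  by_cases hS : p.1 ∈ subsingletonFamily S
  · exact Or.inl ⟨hS, mem_univ _⟩
  obtain ⟨hx, hb⟩ : p.1 ∈ schreierFamily k ∧ p.2 = b :=
    ((isClosed_iff_derivedSet_subset _).1 (isClosed_schreierCode S b k) hp).resolve_left
      fun h ↦ hS h.1
  have hfin := boolSupport_finite_of_mem_schreierFamily hx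
  have hnear : ∀ᶠ q : (ℕ → Bool) × Y in 𝓝 p, boolSupport p.1 ⊆ boolSupport q.1 :=
    continuousAt_fst.eventually (eventually_subset_boolSupport hfin Subset.rfl)
  obtain ⟨q, ⟨hqp, hq⟩, hpq⟩ := ((accPt_iff_frequently.1 hp).and_eventually hnear).exists
  obtain ⟨hqx, hqb⟩ : q.1 ∈ schreierFamily k ∧ q.2 = b :=
    hq.resolve_left fun h ↦ hS (subsingletonFamily_of_boolSupport_subset hpq h.1)
  have hne : boolSupport p.1 ≠ boolSupport q.1 := fun h ↦
    hqp (Prod.ext (boolSupport_injective h.symm) (hqb.trans hb.symm))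
  exact Or.inr ⟨mem_schreierFamily_succ_of_ssubset hfin (hpq.ssubset_of_ne hne) hqx, hb⟩

lemma derivedSet_schreierCode [PerfectSpace Y] (S : Set ℕ) (b : Y) (k : ℕ) :
    derivedSet (schreierCode S b k) = schreierCode S b (k + 1) :=
  derivedSet_schreierCode_subset.antisymm schreierCode_succ_subset_derivedSet

lemma iteratedDerivedSet_schreierCode [PerfectSpace Y] (S : Set ℕ) (b : Y) (k : ℕ) :
    (schreierCode S b 0)ᵈ[k] = schreierCode S b k := by
  induction k with
  | zero => simp
  | succ k ih =>
    rw [Nat.cast_succ, iteratedDerivedSet_succ, ih,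
      (isClosed_schreierCode S b k).relDerivedSet_eq, derivedSet_schreierCode]

lemma perfectKernel_schreierCode [PerfectSpace Y] (S : Set ℕ) (b : Y) :
    perfectKernel (schreierCode S b 0) = subsingletonFamily S ×ˢ univ := by
  apply subset_antisymm
  · intro p hp
    have hmem (k : ℕ) : p ∈ schreierCode S b k :=
      iteratedDerivedSet_schreierCode S b k ▸ perfectKernel_subset_iteratedDerivedSet _ _ hp
    by_contra hS
    have hempty := boolSupport_eq_empty_of_forall_mem_schreierFamily fun k ↦
      ((hmem k).resolve_left hS).1
    exact hS ⟨mem_subsingletonFamily_iff.2 (Or.inl hempty), mem_univ _⟩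
  · exact subset_perfectKernel_of_preperfect (preperfect_prod_univ _) subset_union_left

lemma rankLayer_schreierCode [PerfectSpace Y] (S : Set ℕ) (b : Y) (k : ℕ) :
    rankLayer (schreierCode S b 0) k =
      ((schreierFamily k \ schreierFamily (k + 1)) \ subsingletonFamily S) ×ˢ {b} := by
  have hsucc := iteratedDerivedSet_schreierCode S b (k + 1)
  rw [Nat.cast_succ] at hsucc
  rw [rankLayer, iteratedDerivedSet_schreierCode, hsucc]
  ext p
  simp only [schreierCode, Set.mem_sdiff, mem_union, mem_prod, mem_univ, mem_singleton_iff]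
  tauto

lemma snd_eq_of_mem_closure_rankLayer [PerfectSpace Y] {p : (ℕ → Bool) × Y}
    (hp : p ∈ closure (rankLayer (schreierCode S b 0) k)) : p.2 = b := by
  rw [rankLayer_schreierCode, closure_prod_eq, closure_singleton] at hp
  exact hp.2

lemma mem_closure_rankLayer_of_boolSupport_eq_empty [PerfectSpace Y] {x : ℕ → Bool}
    (hx : boolSupport x = ∅) (k : ℕ) : (x, b) ∈ closure (rankLayer (schreierCode S b 0) k) := by
  rw [rankLayer_schreierCode, closure_prod_eq, closure_singleton]
  refine ⟨?_, rfl⟩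
  -- An interval starting at `m` has rank exactly `k` when it has `m + 2 - k` elements.
  have hlim : Tendsto (fun m ↦ (Ico m (2 * m + 2 - k)).boolIndicator) atTop (𝓝 x) := by
    refine tendsto_pi_nhds.2 fun i ↦ tendsto_nhds_of_eventually_eq ?_
    filter_upwards [eventually_gt_atTop i] with m hm
    have hi : x i = false := by simpa [hx] using (mem_boolSupport (x := x) (i := i)).not
    rw [hi, ← notMem_iff_boolIndicator]
    exact fun h ↦ hm.not_ge h.1
  refine mem_closure_of_tendsto hlim ?_
  filter_upwards [eventually_ge_atTop k] with m hm
  have hcard : (Ico m (2 * m + 2 - k)).encard = (m + 2 - k : ℕ) := by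
    rw [← Finset.coe_Ico, encard_coe_eq_coe_finsetCard, Nat.card_Ico]
    congr 1
    lia
  simp only [schreierFamily, subsingletonFamily, Set.mem_sdiff, mem_ofPred_eq,
    boolSupport_boolIndicator, hcard]
  refine ⟨⟨fun i hi ↦ ?_, fun h ↦ ?_⟩, fun h ↦ ?_⟩
  · have := hi.1
    norm_cast
    lia
  · have := h m ⟨le_rfl, by lia⟩
    norm_cast at this
    lia
  · have := h.1
    norm_cast at this
    lia

lemma mem_closure_rankLayer_of_boolSupport_eq_singleton [PerfectSpace Y] {x : ℕ → Bool}
    (hx : boolSupport x = {n}) : (x, b) ∈ closure (rankLayer (schreierCode S b 0) n) := by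
  rw [rankLayer_schreierCode, closure_prod_eq, closure_singleton]
  refine ⟨?_, rfl⟩
  have hlim := Nat.cofinite_eq_atTop ▸ tendsto_update_cofinite x fun _ ↦ true
  refine mem_closure_of_tendsto hlim ?_
  filter_upwards [eventually_gt_atTop n] with m hm
  have hcard : ({m, n} : Set ℕ).encard = 2 := encard_pair hm.ne'
  simp only [schreierFamily, subsingletonFamily, Set.mem_sdiff, mem_ofPred_eq,
    boolSupport_update_true, hx, hcard]
  refine ⟨⟨fun i hi ↦ ?_, fun h ↦ ?_⟩, fun h ↦ ?_⟩
  · have hni : n ≤ i := by rcases hi with rfl | rfl <;> lia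
    norm_cast
    lia
  · have := h n (by simp)
    norm_cast at this
    lia
  · exact absurd h.1 (by norm_num)

lemma le_of_mem_closure_rankLayer_of_boolSupport_eq_singleton [PerfectSpace Y] {x : ℕ → Bool}
    (hn : n ∈ S) (hx : boolSupport x = {n})
    (h : (x, b) ∈ closure (rankLayer (schreierCode S b 0) k)) : k ≤ n := by
  rw [rankLayer_schreierCode, closure_prod_eq] at h
  have hnear := eventually_subset_boolSupport (finite_singleton n) hx.ge
  obtain ⟨x', ⟨⟨hx', -⟩, hS⟩, hnx'⟩ :=
    ((mem_closure_iff_frequently.1 h.1).and_eventually hnear).exists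
  have hcard : 1 < (boolSupport x').encard := by
    by_contra! hle
    have heq : {n} = boolSupport x' :=
      (finite_singleton n).eq_of_subset_of_encard_le hnx' (by simpa using hle)
    exact hS (mem_subsingletonFamily_iff.2 (Or.inr ⟨n, hn, heq.symm⟩))
  have hle : ((2 + k : ℕ) : ℕ∞) ≤ ((n + 2 : ℕ) : ℕ∞) :=
    calc ((2 + k : ℕ) : ℕ∞) = 1 + 1 + k := by norm_num
      _ ≤ (boolSupport x').encard + k := by gcongr; exact Order.add_one_le_of_lt hcard
      _ ≤ n + 2 := hx' n (hnx' rfl)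
  have := Nat.cast_le.1 hle
  lia

theorem rankSpectrum_schreierCode [PerfectSpace Y] (S : Set ℕ) (b : Y) :
    rankSpectrum (schreierCode S b 0) = S := by
  have hgreatest {n : ℕ} {x : ℕ → Bool} (hn : n ∈ S) (hx : boolSupport x = {n}) :
      IsGreatest {k | (x, b) ∈ closure (rankLayer (schreierCode S b 0) k)} n :=
    ⟨mem_closure_rankLayer_of_boolSupport_eq_singleton hx,
      fun _ ↦ le_of_mem_closure_rankLayer_of_boolSupport_eq_singleton hn hx⟩
  ext n
  rw [rankSpectrum, perfectKernel_schreierCode]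
  constructor
  · rintro ⟨⟨x, y⟩, ⟨hx, -⟩, hn⟩
    obtain rfl : y = b := snd_eq_of_mem_closure_rankLayer hn.1
    rcases mem_subsingletonFamily_iff.1 hx with hempty | ⟨m, hm, hsingle⟩
    · have hlt : n + 1 ≤ n := hn.2 (mem_closure_rankLayer_of_boolSupport_eq_empty hempty (n + 1))
      lia
    · exact (hgreatest hm hsingle).unique hn ▸ hm
  · intro hn
    have hx : boolSupport ({n} : Set ℕ).boolIndicator = {n} := boolSupport_boolIndicator _
    exact ⟨(({n} : Set ℕ).boolIndicator, b),
      ⟨mem_subsingletonFamily_iff.2 (Or.inr ⟨n, hn, hx⟩), mem_univ _⟩, hgreatest hn hx⟩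

end SchreierCode

section Cardinality

open Cardinal

lemma mk_isClosed_le_continuum (X : Type*) [TopologicalSpace X] [SecondCountableTopology X] :
    #{s : Set X // IsClosed s} ≤ 𝔠 := by
  obtain ⟨B, hB, -, hbasis⟩ := TopologicalSpace.exists_countable_basis X
  have hmeas (s : Set X) (hs : IsClosed s) :
      @MeasurableSet X (MeasurableSpace.generateFrom B) s := by
    borelize X
    rw [← hbasis.borel_eq_generateFrom]
    exact hs.measurableSet
  exact (mk_subtype_mono hmeas).trans <|
    MeasurableSpace.cardinal_measurableSet_le_continuum (hB.le_aleph0.trans aleph0_le_continuum)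

/-- The homeomorphism of the square of the Cantor space with the Cantor space, through which the
subsets of `2^ℕ × Y` with `Y = 2^ℕ` become subsets of any space containing `2^ℕ`. -/
def cantorSquareHomeomorph : (ℕ → Bool) × (ℕ → Bool) ≃ₜ (ℕ → Bool) :=
  Homeomorph.sumArrowHomeomorphProdArrow.symm.trans
    (Homeomorph.piCongrLeft (Y := fun _ ↦ Bool) Equiv.natSumNatEquivNat)

variable {X : Type*} [TopologicalSpace X]

lemma exists_isClosed_rankSpectrum_eq [T2Space X] {f : (ℕ → Bool) → X} (hf : Continuous f)
    (hinj : Function.Injective f) (S : Set ℕ) : ∃ s : Set X, IsClosed s ∧ rankSpectrum s = S := by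
  have hg : IsClosedEmbedding (f ∘ cantorSquareHomeomorph) :=
    (hf.isClosedEmbedding hinj).comp cantorSquareHomeomorph.isClosedEmbedding
  refine ⟨f ∘ cantorSquareHomeomorph '' schreierCode S ⊥ 0,
    hg.isClosedMap _ (isClosed_schreierCode S ⊥ 0), ?_⟩
  rw [rankSpectrum_image hg.isEmbedding, rankSpectrum_schreierCode]

theorem statement_14_general (X : Type*) [TopologicalSpace X] [T2Space X]
    [SecondCountableTopology X] {f : (ℕ → Bool) → X} (hf : Continuous f)
    (hinj : Function.Injective f) :
    Cardinal.mk (Quot fun (A B : {s : Set X // IsClosed s}) =>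
      Nonempty (↥A.1 ≃ₜ ↥B.1)) = Cardinal.continuum := by
  apply le_antisymm
  · exact mk_quot_le.trans (mk_isClosed_le_continuum X)
  · let spectrum : Quot (fun A B : {s : Set X // IsClosed s} ↦ Nonempty (A.1 ≃ₜ B.1)) → Set ℕ :=
      Quot.lift (fun A ↦ rankSpectrum A.1) fun _ _ ⟨e⟩ ↦ rankSpectrum_eq_of_homeomorph e
    have hsurj : Function.Surjective spectrum := fun S ↦
      let ⟨s, hs, hsS⟩ := exists_isClosed_rankSpectrum_eq hf hinj S
      ⟨Quot.mk _ ⟨s, hs⟩, hsS⟩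
    simpa using lift_mk_le_lift_mk_of_surjective hsurj

end Cardinality

theorem statement_14 (X : Type*) [TopologicalSpace X] [PolishSpace X] [Uncountable X] :
    Cardinal.mk (Quot fun (A B : {s : Set X // IsClosed s}) =>
      Nonempty (↥A.1 ≃ₜ ↥B.1)) = Cardinal.continuum := by
  obtain ⟨f, -, hf, hinj⟩ :=
    (isClosed_univ (X := X)).exists_nat_bool_injection_of_not_countable not_countable_univ
  exact statement_14_general X hf hinj

end
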